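/- Let X be a real Banach space and let g : X → X be a compact map. Then at least one of the following holds: (a) g has a fixed point, i.e. there exists u ∈ X with g(u) = u; or (b) the set K(g) = {u ∈ X : u = t·g(u) for some t with 0 < t < 1} is unbounded. -/

import Mathlib

/-!
Finite dimensions come first, by the volume argument of Milnor, Rogers and Gröger. If `G` is `C¹` on
a compact convex set `s` and is the identity on the frontier of `s`, put `h = G - id`. For small `t`
the map `id + t h` is a bijection of `s`, so `∫ₛ det (id + t h')` equals the volume of `s`; this
integral is a polynomial in `t`, hence it is the volume of `s` also at `t = 1`. A map of constant
norm has singular derivative, so no such `G` can retract a ball onto its boundary sphere, and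
Brouwer's theorem follows.

Schauder's theorem reduces to Brouwer's by moving a compact set slightly into a finite-dimensional
subspace with a partition of unity. Finally, let `r` be the radial retraction onto a ball of
radius `R`. A fixed point `u` of `g ∘ r` is a fixed point of `g` when `‖u‖ ≤ R`, and otherwise
`r u` has norm `R` and equals `(R / ‖u‖) • g (r u)`.
-/

open Set Metric MeasureTheory Function
open scoped NNReal Polynomial Topology

namespace LeraySchauder

section Determinant

theorem exists_polynomial_eval_eq_det_one_add_smul {R M : Type*} [CommRing R] [Nontrivial R]
    [AddCommGroup M] [Module R M] [Module.Free R M] [Module.Finite R M] (f : M →ₗ[R] M) :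
    ∃ p : R[X], p.natDegree ≤ Module.finrank R M ∧
      ∀ t : R, p.eval t = LinearMap.det (1 + t • f) := by
  classical
  let b := Module.Free.chooseBasis R M
  let A := LinearMap.toMatrix b b f
  refine ⟨((Polynomial.X : R[X]) • A.map Polynomial.C + (1 : Matrix _ _ R).map Polynomial.C).det,
    ?_, fun t => ?_⟩
  · rw [Module.finrank_eq_card_chooseBasisIndex]
    exact Polynomial.natDegree_det_X_add_C_le A 1
  · have htoMatrix : LinearMap.toMatrix b b (1 + t • f) = t • A + 1 := by
      rw [map_add, map_smul, LinearMap.toMatrix_one, add_comm]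
    rw [← LinearMap.det_toMatrix b, htoMatrix, ← Polynomial.coe_evalRingHom, RingHom.map_det]
    congr 1
    ext i j
    rcases eq_or_ne i j with rfl | hij
    · simpa using mul_comm (A i i) t
    · simpa [hij] using mul_comm (A i j) t

variable {E : Type*} [NormedAddCommGroup E] [NormedSpace ℝ E] [FiniteDimensional ℝ E]

theorem det_one_add_pos_of_norm_lt_one {A : E →L[ℝ] E} (hA : ‖A‖ < 1) : 0 < (1 + A).det := by
  have : CompleteSpace E := FiniteDimensional.complete ℝ E
  have hcont : ContinuousOn (fun t : ℝ => (1 + t • A).det) (Icc 0 1) :=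
    (ContinuousLinearMap.continuous_det.comp (by fun_prop)).continuousOn
  have hne : ∀ t ∈ Icc (0 : ℝ) 1, (1 + t • A).det ≠ 0 := by
    rintro t ⟨ht0, ht1⟩
    have hnorm : ‖-(t • A)‖ < 1 := by
      rw [norm_neg, norm_smul, Real.norm_of_nonneg ht0]
      exact (mul_le_of_le_one_left (norm_nonneg A) ht1).trans_lt hA
    have hunit : IsUnit (1 + t • A) := by simpa using isUnit_one_sub_of_norm_lt_one hnorm
    exact (LinearMap.isUnit_det _ (hunit.map ContinuousLinearMap.toLinearMapRingHom)).ne_zero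
  by_contra! hle
  have hzero : (0 : ℝ) ∈ Icc (1 + (1 : ℝ) • A).det (1 + (0 : ℝ) • A).det := by
    simpa [ContinuousLinearMap.det] using hle
  obtain ⟨t, ht, hdet⟩ := intermediate_value_Icc' zero_le_one hcont hzero
  exact hne t ht hdet

end Determinant

theorem exists_polynomial_eval_eq_integral {α : Type*} [MeasurableSpace α] {μ : Measure α} {n : ℕ}
    {p : α → ℝ[X]} (hdeg : ∀ x, (p x).natDegree ≤ n)
    (hint : ∀ t : ℝ, Integrable (fun x => (p x).eval t) μ) :
    ∃ q : ℝ[X], ∀ t, q.eval t = ∫ x, (p x).eval t ∂μ := by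
  let nodes := Finset.range (n + 1)
  have hinj : InjOn (Nat.cast : ℕ → ℝ) nodes := Nat.cast_injective.injOn
  have hinterp : ∀ x, p x = Lagrange.interpolate nodes (Nat.cast : ℕ → ℝ)
      fun i => (p x).eval (i : ℝ) := fun x =>
    Lagrange.eq_interpolate hinj <| by
      rw [Finset.card_range]
      exact Polynomial.degree_le_natDegree.trans_lt (by exact_mod_cast Nat.lt_succ_of_le (hdeg x))
  refine ⟨Lagrange.interpolate nodes (Nat.cast : ℕ → ℝ) fun i => ∫ x, (p x).eval (i : ℝ) ∂μ,
    fun t => ?_⟩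
  have heval : ∀ r : ℕ → ℝ, (Lagrange.interpolate nodes (Nat.cast : ℕ → ℝ) r).eval t =
      ∑ i ∈ nodes, r i * (Lagrange.basis nodes (Nat.cast : ℕ → ℝ) i).eval t := fun r => by
    simp only [Lagrange.interpolate_apply, Polynomial.eval_finsetSum, Polynomial.eval_mul,
      Polynomial.eval_C]
  calc
    _ = ∑ i ∈ nodes, ∫ x, (p x).eval (i : ℝ) *
          (Lagrange.basis nodes (Nat.cast : ℕ → ℝ) i).eval t ∂μ := by
      simp only [heval, integral_mul_const]
    _ = ∫ x, ∑ i ∈ nodes, (p x).eval (i : ℝ) *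
          (Lagrange.basis nodes (Nat.cast : ℕ → ℝ) i).eval t ∂μ :=
      (integral_finsetSum nodes fun i _ => (hint (i : ℝ)).mul_const
        ((Lagrange.basis nodes (Nat.cast : ℕ → ℝ) i).eval t)).symm
    _ = ∫ x, (p x).eval t ∂μ := by
      refine integral_congr_ae (.of_forall fun x => ?_)
      change _ = (p x).eval t
      rw [hinterp x, heval]

section Perturbation

theorem bijective_add_of_lipschitzWith {E : Type*} [NormedAddCommGroup E] [CompleteSpace E]
    {c : ℝ≥0} {h : E → E} (hh : LipschitzWith c h) (hc : c < 1) :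
    Bijective fun x => x + h x := by
  have hcontr : ∀ y, ContractingWith c fun x => y - h x := fun y =>
    ⟨hc, LipschitzWith.of_dist_le_mul fun a b => by
      rw [dist_sub_left]
      exact hh.dist_le_mul a b⟩
  refine ⟨fun a b hab => ?_, fun y => ?_⟩
  · exact (hcontr (a + h a)).fixedPoint_unique' (add_sub_cancel_right a (h a))
      (sub_eq_of_eq_add hab)
  · exact ⟨_, (sub_eq_iff_eq_add.1 (hcontr y).fixedPoint_isFixedPt).symm⟩

variable {E : Type*} [NormedAddCommGroup E] [NormedSpace ℝ E] [FiniteDimensional ℝ E] {s : Set E}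
  {c : ℝ≥0}

theorem lipschitzWith_indicator_of_frontier {F : Type*} [SeminormedAddCommGroup F] {h : E → F}
    (hs : IsClosed s) (hh : LipschitzOnWith c h s) (hzero : ∀ x ∈ frontier s, h x = 0) :
    LipschitzWith c (s.indicator h) := by
  have hnorm : ∀ x ∈ s, ∀ y ∉ s, ‖h x‖ ≤ c * dist x y := by
    intro x hx y hy
    obtain ⟨z, hz, hdist⟩ := exists_mem_frontier_infDist_compl_eq_dist hx
      ((ne_univ_iff_exists_notMem s).2 ⟨y, hy⟩)
    calc
      ‖h x‖ = dist (h x) (h z) := by rw [hzero z hz, dist_zero_right]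
      _ ≤ c * dist x z := hh.dist_le_mul x hx z (hs.frontier_subset hz)
      _ ≤ c * dist x y := by
        rw [← hdist]
        gcongr
        exact infDist_le_dist_of_mem hy
  refine LipschitzWith.of_dist_le_mul fun x y => ?_
  by_cases hx : x ∈ s <;> by_cases hy : y ∈ s
  · simpa only [indicator_of_mem, hx, hy] using hh.dist_le_mul x hx y hy
  · simpa only [indicator_of_mem hx, indicator_of_notMem hy, dist_zero_right] using hnorm x hx y hy
  · simpa only [indicator_of_notMem hx, indicator_of_mem hy, dist_zero_left, dist_comm x y] using
      hnorm y hy x hx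
  · simp only [indicator_of_notMem hx, indicator_of_notMem hy, dist_self]
    positivity

theorem bijOn_add_of_lipschitzOnWith {h : E → E} (hs : IsClosed s) (hh : LipschitzOnWith c h s)
    (hc : c < 1) (hzero : ∀ x ∈ frontier s, h x = 0) : BijOn (fun x => x + h x) s s := by
  have : CompleteSpace E := FiniteDimensional.complete ℝ E
  let f : E → E := fun x => x + s.indicator h x
  have hf : Bijective f :=
    bijective_add_of_lipschitzWith (lipschitzWith_indicator_of_frontier hs hh hzero) hc
  have hcompl : f '' sᶜ = sᶜ :=
    (image_congr fun x hx => by simp only [f, indicator_of_notMem hx, add_zero, id]).trans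
      (image_id _)
  have himage : f '' s = s := compl_injective <| by rw [← image_compl_eq hf, hcompl]
  have hfs : BijOn f s s := ⟨mapsTo_iff_image_subset.2 himage.subset, hf.injective.injOn, himage.ge⟩
  exact hfs.congr fun x hx => by simp only [f, indicator_of_mem hx]

end Perturbation

section Volume

variable {E : Type*} [NormedAddCommGroup E] [NormedSpace ℝ E] [FiniteDimensional ℝ E]
  [MeasurableSpace E] [BorelSpace E] (μ : Measure E) [μ.IsAddHaarMeasure] {s : Set E}

theorem setIntegral_det_one_add_of_nnnorm_le {h : E → E} {h' : E → E →L[ℝ] E} {c : ℝ≥0}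
    (hs : IsClosed s) (hconv : Convex ℝ s) (hh : ∀ x ∈ s, HasFDerivWithinAt h (h' x) s x)
    (hbound : ∀ x ∈ s, ‖h' x‖₊ ≤ c) (hc : c < 1) (hzero : ∀ x ∈ frontier s, h x = 0) :
    ∫ x in s, (1 + h' x).det ∂μ = μ.real s := by
  have hbij : BijOn (fun x => x + h x) s s := bijOn_add_of_lipschitzOnWith hs
    (hconv.lipschitzOnWith_of_nnnorm_hasFDerivWithin_le hh hbound) hc hzero
  have hchange := integral_image_eq_integral_abs_det_fderiv_smul μ hs.measurableSet
    (f := fun x => x + h x) (f' := fun x => 1 + h' x)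
    (fun x hx => (hasFDerivWithinAt_id x s).add (hh x hx)) hbij.injOn fun _ => (1 : ℝ)
  rw [hbij.image_eq] at hchange
  calc
    ∫ x in s, (1 + h' x).det ∂μ = ∫ x in s, |(1 + h' x).det| • (1 : ℝ) ∂μ :=
      setIntegral_congr_fun hs.measurableSet fun x hx => by
        have hpos : 0 < (1 + h' x).det := det_one_add_pos_of_norm_lt_one <|
          (NNReal.coe_le_coe.2 (hbound x hx)).trans_lt (NNReal.coe_lt_one.2 hc)
        simp only [abs_of_pos hpos, smul_eq_mul, mul_one]
    _ = ∫ _ in s, (1 : ℝ) ∂μ := hchange.symm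
    _ = μ.real s := by simp

theorem exists_polynomial_eval_eq_setIntegral_det_one_add_smul {A : E → E →L[ℝ] E}
    (hs : IsCompact s) (hA : ContinuousOn A s) :
    ∃ q : ℝ[X], ∀ t, q.eval t = ∫ x in s, (1 + t • A x).det ∂μ := by
  choose p hdeg hp using fun x => exists_polynomial_eval_eq_det_one_add_smul (A x : E →ₗ[ℝ] E)
  have hp_det : ∀ (t : ℝ) x, (p x).eval t = (1 + t • A x).det := fun t x => hp x t
  have hint : ∀ t : ℝ, IntegrableOn (fun x => (p x).eval t) s μ := fun t => by
    simp only [hp_det]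
    exact (ContinuousLinearMap.continuous_det.comp_continuousOn
      (by fun_prop)).integrableOn_compact hs
  simpa only [hp_det] using exists_polynomial_eval_eq_integral hdeg hint

theorem setIntegral_det_eq_of_eqOn_frontier {G : E → E} {G' : E → E →L[ℝ] E} (hs : IsCompact s)
    (hconv : Convex ℝ s) (hG : ∀ x ∈ s, HasFDerivWithinAt G (G' x) s x)
    (hG' : ContinuousOn G' s) (hid : EqOn G id (frontier s)) :
    ∫ x in s, (G' x).det ∂μ = μ.real s := by
  let h' : E → E →L[ℝ] E := fun x => G' x - 1
  have hh'cont : ContinuousOn h' s := hG'.sub continuousOn_const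
  obtain ⟨q, hq⟩ := exists_polynomial_eval_eq_setIntegral_det_one_add_smul μ hs hh'cont
  obtain ⟨C, hC0, hC⟩ := (hs.image_of_continuousOn hh'cont).isBounded.exists_pos_norm_le
  lift C to ℝ≥0 using hC0.le
  have hsmall : ∀ t ∈ Ico (0 : ℝ) (C : ℝ)⁻¹, q.eval t = μ.real s := by
    rintro t ⟨ht0, htC⟩
    lift t to ℝ≥0 using ht0
    rw [hq]
    refine setIntegral_det_one_add_of_nnnorm_le μ (h := fun x => (t : ℝ) • (G x - x))
      (c := t * C) hs.isClosed hconv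
      (fun x hx => ((hG x hx).sub (hasFDerivWithinAt_id x s)).const_smul (t : ℝ)) (fun x hx => ?_)
      ?_ fun x hx => by simp only [hid hx, id, sub_self, smul_zero]
    · rw [nnnorm_smul, NNReal.nnnorm_eq]
      gcongr
      exact hC _ (mem_image_of_mem h' hx)
    · exact_mod_cast (lt_inv_mul_iff₀' hC0).1 (htC.trans_eq (mul_one _).symm)
  have hq_const : q = Polynomial.C (μ.real s) := by
    refine Polynomial.eq_of_infinite_eval_eq _ _ ((Ico_infinite (inv_pos.2 hC0)).mono ?_)
    exact fun t ht => (hsmall t ht).trans Polynomial.eval_C.symm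
  calc
    ∫ x in s, (G' x).det ∂μ = q.eval 1 := by simp only [hq, h', one_smul, add_sub_cancel]
    _ = μ.real s := by rw [hq_const, Polynomial.eval_C]

end Volume

section Brouwer

theorem det_eq_zero_of_norm_eventuallyEq_const {E : Type*} [NormedAddCommGroup E]
    [InnerProductSpace ℝ E] [FiniteDimensional ℝ E] {G : E → E} {G' : E →L[ℝ] E} {x : E} {R : ℝ}
    (hR : R ≠ 0) (hG : HasFDerivAt G G' x) (hnorm : ∀ᶠ y in 𝓝 x, ‖G y‖ = R) : G'.det = 0 := by
  by_contra hdet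
  obtain ⟨v, hv⟩ : ∃ v, G' v = G x :=
    (LinearMap.equivOfDetNeZero (G' : E →ₗ[ℝ] E) hdet).surjective (G x)
  have hconst : (fun y => ‖G y‖ ^ 2) =ᶠ[𝓝 x] fun _ => R ^ 2 :=
    hnorm.mono fun y hy => by simp only [hy]
  have hderiv := hG.norm_sq.unique ((hasFDerivAt_const (R ^ 2) x).congr_of_eventuallyEq hconst)
  have happly := DFunLike.congr_fun hderiv v
  simp [hv, hnorm.self_of_nhds, hR] at happly

variable {E : Type*} [NormedAddCommGroup E]

theorem exists_eq_zero_of_eqOn_sphere [InnerProductSpace ℝ E] [FiniteDimensional ℝ E]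
    {φ : E → E} {R : ℝ} (hφ : ContDiff ℝ 1 φ) (hR : 0 < R) (hid : EqOn φ id (sphere 0 R)) :
    ∃ x, φ x = 0 := by
  by_contra! hne
  borelize E
  let μ : Measure E := Measure.addHaar
  let G : E → E := fun x => (R / ‖φ x‖) • φ x
  have hG : ContDiff ℝ 1 G :=
    (contDiff_const.div (hφ.norm ℝ hne) fun x => norm_ne_zero_iff.2 (hne x)).smul hφ
  have hG_deriv : ∀ x, HasFDerivAt G (fderiv ℝ G x) x := fun x =>
    (hG.differentiable one_ne_zero x).hasFDerivAt
  have hG_norm : ∀ x, ‖G x‖ = R := fun x => by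
    simp only [G, norm_smul, norm_div, norm_norm, Real.norm_of_nonneg hR.le]
    exact div_mul_cancel₀ R (norm_ne_zero_iff.2 (hne x))
  have hG_id : EqOn G id (frontier (closedBall 0 R)) := by
    rw [frontier_closedBall _ hR.ne']
    intro x hx
    simp [G, hid hx, mem_sphere_zero_iff_norm.1 hx, hR.ne']
  have hvolume := setIntegral_det_eq_of_eqOn_frontier μ (isCompact_closedBall 0 R)
    (convex_closedBall 0 R) (fun x _ => (hG_deriv x).hasFDerivWithinAt)
    (hG.continuous_fderiv one_ne_zero).continuousOn hG_id
  have hdet : ∀ x, (fderiv ℝ G x).det = 0 := fun x =>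
    det_eq_zero_of_norm_eventuallyEq_const hR.ne' (hG_deriv x) (.of_forall hG_norm)
  simp only [hdet, integral_zero] at hvolume
  exact (ENNReal.toReal_pos (measure_closedBall_pos μ 0 hR).ne'
    measure_closedBall_lt_top.ne).ne hvolume

theorem exists_isFixedPt_of_contDiff [InnerProductSpace ℝ E] [FiniteDimensional ℝ E] {f : E → E}
    (hf : ContDiff ℝ 1 f) (hbdd : Bornology.IsBounded (range f)) : ∃ x, IsFixedPt f x := by
  obtain ⟨M, hM0, hM⟩ := hbdd.exists_pos_norm_le
  let η : ContDiffBump (0 : E) := ⟨M, M + 1, hM0, lt_add_one M⟩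
  obtain ⟨x, hx⟩ := exists_eq_zero_of_eqOn_sphere (φ := fun x => x - η x • f x) (R := M + 1)
    (contDiff_id.sub (η.contDiff.smul hf)) (by positivity) fun x hx => by
      have hηx : η x = 0 := η.zero_of_le_dist (mem_sphere.1 hx).ge
      simp only [hηx, zero_smul, sub_zero, id]
  have hx_eq : x = η x • f x := sub_eq_zero.1 hx
  have hx_norm : ‖x‖ ≤ M := by
    rw [hx_eq, norm_smul, Real.norm_of_nonneg η.nonneg]
    exact (mul_le_of_le_one_left (norm_nonneg _) η.le_one).trans (hM _ (mem_range_self x))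
  have hηx : η x = 1 := η.one_of_mem_closedBall (mem_closedBall_zero_iff.2 hx_norm)
  exact ⟨x, by rw [IsFixedPt, ← one_smul ℝ (f x), ← hηx, ← hx_eq]⟩

theorem exists_isFixedPt_of_forall_dist_lt {α : Type*} [MetricSpace α] {f : α → α} {K : Set α}
    (hf : Continuous f) (hK : IsCompact K) (hfK : ∀ x, f x ∈ K)
    (happrox : ∀ ε > 0, ∃ x, dist x (f x) < ε) : ∃ x, IsFixedPt f x := by
  choose u hu using fun n : ℕ => happrox (1 / ((n : ℝ) + 1)) Nat.one_div_pos_of_nat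
  obtain ⟨z, -, σ, hσ, hz⟩ := hK.tendsto_subseq fun n => hfK (u n)
  have hdist : Filter.Tendsto (fun n => dist (u (σ n)) (f (u (σ n)))) .atTop (𝓝 0) :=
    squeeze_zero (fun _ => dist_nonneg) (fun n => (hu (σ n)).le)
      (tendsto_one_div_add_atTop_nhds_zero_nat.comp hσ.tendsto_atTop)
  have hu_lim : Filter.Tendsto (fun n => u (σ n)) .atTop (𝓝 z) := (tendsto_iff_of_dist hdist).2 hz
  exact ⟨z, tendsto_nhds_unique ((hf.tendsto z).comp hu_lim) hz⟩

theorem exists_isFixedPt_of_isBounded_range_of_innerProductSpace [InnerProductSpace ℝ E]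
    [FiniteDimensional ℝ E] {f : E → E} (hf : Continuous f)
    (hbdd : Bornology.IsBounded (range f)) : ∃ x, IsFixedPt f x := by
  have : ProperSpace E := FiniteDimensional.proper ℝ E
  refine exists_isFixedPt_of_forall_dist_lt hf hbdd.isCompact_closure
    (fun x => subset_closure (mem_range_self x)) fun ε hε => ?_
  obtain ⟨k, hk, hkf, -⟩ := hf.exists_contDiff_approx 1 continuous_const fun _ => hε
  have hk_bdd : Bornology.IsBounded (range k) :=
    (hbdd.thickening (δ := ε)).subset <| range_subset_iff.2 fun x =>
      mem_thickening_iff.2 ⟨f x, mem_range_self x, hkf x⟩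
  obtain ⟨x, hx⟩ := exists_isFixedPt_of_contDiff hk hk_bdd
  refine ⟨x, ?_⟩
  simpa only [hx.eq] using hkf x

theorem exists_isFixedPt_of_isBounded_range [NormedSpace ℝ E] [FiniteDimensional ℝ E] {f : E → E}
    (hf : Continuous f) (hbdd : Bornology.IsBounded (range f)) : ∃ x, IsFixedPt f x := by
  let e : E ≃L[ℝ] EuclideanSpace ℝ (Fin (Module.finrank ℝ E)) := toEuclidean
  have hbdd' : Bornology.IsBounded (range (e ∘ f ∘ e.symm)) :=
    (e.lipschitz.isBounded_image hbdd).subset <| by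
      rw [range_comp]
      exact image_mono (range_comp_subset_range _ _)
  obtain ⟨y, hy⟩ := exists_isFixedPt_of_isBounded_range_of_innerProductSpace
    (e.continuous.comp (hf.comp e.symm.continuous)) hbdd'
  exact ⟨e.symm y, (e.eq_symm_apply).2 hy⟩

end Brouwer

section Schauder

variable {X : Type*} [NormedAddCommGroup X] [NormedSpace ℝ X]

theorem exists_continuous_finiteDimensional_dist_lt {K : Set X} (hK : IsCompact K) {ε : ℝ}
    (hε : 0 < ε) :
    ∃ (V : Submodule ℝ X) (P : X → X), FiniteDimensional ℝ V ∧ Continuous P ∧ (∀ x, P x ∈ V) ∧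
      ∀ x ∈ K, dist (P x) x < ε := by
  obtain ⟨T, -, hT, hKT⟩ := hK.finite_cover_balls hε
  have : Finite T := hT
  obtain ⟨ρ, hρ⟩ := PartitionOfUnity.exists_isSubordinate_of_locallyFinite hK.isClosed
    (fun i : T => ball (i : X) ε) (fun _ => isOpen_ball) (locallyFinite_of_finite _)
    (by simpa only [iUnion_coe_set] using hKT)
  refine ⟨Submodule.span ℝ T, fun x => ∑ᶠ i, ρ i x • (i : X),
    FiniteDimensional.span_of_finite ℝ hT, ?_, fun x => ?_, fun x hx => ?_⟩
  · exact continuous_finsum (fun i => (ρ i).continuous.smul continuous_const)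
      (locallyFinite_of_finite _)
  · exact finsum_induction (· ∈ Submodule.span ℝ T) (zero_mem _) (fun _ _ => add_mem) fun i =>
      Submodule.smul_mem _ _ (Submodule.subset_span i.2)
  · exact ρ.finsum_smul_mem_convex (g := fun i _ => (i : X)) hx
      (fun i hi => mem_ball_comm.1 (hρ i (subset_tsupport _ hi))) (convex_ball x ε)

theorem exists_isFixedPt_of_forall_mem_isCompact {f : X → X} {K : Set X} (hf : Continuous f)
    (hK : IsCompact K) (hfK : ∀ x, f x ∈ K) : ∃ x, IsFixedPt f x := by
  refine exists_isFixedPt_of_forall_dist_lt hf hK hfK fun ε hε => ?_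
  obtain ⟨V, P, hV, hP, hPV, hPdist⟩ := exists_continuous_finiteDimensional_dist_lt hK hε
  let F : V → V := fun v => ⟨P (f v), hPV _⟩
  have hF : Continuous F := (hP.comp (hf.comp continuous_subtype_val)).subtype_mk _
  have hF_bdd : Bornology.IsBounded (range F) :=
    (AntilipschitzWith.subtype_coe (V : Set X)).isBounded_preimage (hK.image hP).isBounded |>.subset
      (range_subset_iff.2 fun v => mem_image_of_mem P (hfK v))
  obtain ⟨v, hv⟩ := exists_isFixedPt_of_isBounded_range hF hF_bdd
  have hPv : P (f v) = v := congrArg Subtype.val hv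
  exact ⟨v, by simpa only [hPv] using hPdist (f v) (hfK v)⟩

end Schauder

section RadialRetraction

variable {X : Type*} [NormedAddCommGroup X] [NormedSpace ℝ X] {R : ℝ} {x : X}

/-- The radial retraction of a normed space onto the closed ball of radius `R > 0` about `0`. -/
noncomputable def radialRetraction (R : ℝ) (x : X) : X := (R / max R ‖x‖) • x

theorem continuous_radialRetraction (hR : 0 < R) : Continuous (radialRetraction (X := X) R) :=
  (continuous_const.div (continuous_const.max continuous_norm) fun _ =>
    (lt_max_of_lt_left hR).ne').smul continuous_id

theorem radialRetraction_of_norm_le (hR : 0 < R) (hx : ‖x‖ ≤ R) : radialRetraction R x = x := by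
  rw [radialRetraction, max_eq_left hx, div_self hR.ne', one_smul]

theorem radialRetraction_of_le_norm (hx : R ≤ ‖x‖) : radialRetraction R x = (R / ‖x‖) • x := by
  rw [radialRetraction, max_eq_right hx]

theorem norm_radialRetraction_of_le_norm (hR : 0 < R) (hx : R ≤ ‖x‖) :
    ‖radialRetraction R x‖ = R := by
  rw [radialRetraction_of_le_norm hx, norm_smul, norm_div, norm_norm, Real.norm_of_nonneg hR.le,
    div_mul_cancel₀ R (hR.trans_le hx).ne']

theorem radialRetraction_mem_closedBall (hR : 0 < R) (x : X) :
    radialRetraction R x ∈ closedBall 0 R := by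
  rw [mem_closedBall_zero_iff]
  rcases le_total ‖x‖ R with hx | hx
  · rwa [radialRetraction_of_norm_le hR hx]
  · exact (norm_radialRetraction_of_le_norm hR hx).le

theorem exists_isFixedPt_or_exists_mem_sphere_eq_smul {g : X → X} (hR : 0 < R)
    (hg : ContinuousOn g (closedBall 0 R)) (hcomp : IsCompact (closure (g '' closedBall 0 R))) :
    (∃ u ∈ closedBall 0 R, IsFixedPt g u) ∨
      ∃ u ∈ sphere 0 R, ∃ t : ℝ, 0 < t ∧ t < 1 ∧ u = t • g u := by
  obtain ⟨u, hu⟩ := exists_isFixedPt_of_forall_mem_isCompact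
    (hg.comp_continuous (continuous_radialRetraction hR) (radialRetraction_mem_closedBall hR)) hcomp
    fun x => subset_closure (mem_image_of_mem g (radialRetraction_mem_closedBall hR x))
  have hu_eq : g (radialRetraction R u) = u := hu
  rcases le_or_gt ‖u‖ R with hle | hlt
  · rw [radialRetraction_of_norm_le hR hle] at hu_eq
    exact .inl ⟨u, mem_closedBall_zero_iff.2 hle, hu_eq⟩
  · have hu_pos : 0 < ‖u‖ := hR.trans hlt
    refine .inr ⟨radialRetraction R u,
      mem_sphere_zero_iff_norm.2 (norm_radialRetraction_of_le_norm hR hlt.le),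
      R / ‖u‖, div_pos hR hu_pos, (div_lt_one hu_pos).2 hlt, ?_⟩
    rw [hu_eq, radialRetraction_of_le_norm hlt.le]

end RadialRetraction

end LeraySchauder

theorem leray_schauder_alternative_general {X : Type*} [NormedAddCommGroup X] [NormedSpace ℝ X]
    (g : X → X) (hg_cont : Continuous g)
    (hg_comp : ∀ s : Set X, Bornology.IsBounded s → IsCompact (closure (g '' s))) :
    (∃ u : X, g u = u) ∨
      ¬ Bornology.IsBounded {u : X | ∃ t : ℝ, 0 < t ∧ t < 1 ∧ u = t • g u} := by
  refine or_iff_not_imp_right.2 fun hbdd => ?_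
  obtain ⟨R, hR, hsub⟩ := (not_not.1 hbdd).subset_ball_lt 0 0
  rcases LeraySchauder.exists_isFixedPt_or_exists_mem_sphere_eq_smul hR hg_cont.continuousOn
    (hg_comp _ isBounded_closedBall) with ⟨u, -, hu⟩ | ⟨u, hu_sphere, hu⟩
  · exact ⟨u, hu⟩
  · exact absurd (mem_sphere.1 hu_sphere) (mem_ball.1 (hsub hu)).ne

/-- **Leray–Schauder alternative principle.** If `X` is a real Banach space and
`g : X → X` is compact (continuous and mapping bounded sets into relatively
compact sets), then either `g` has a fixed point, or the set
`K(g) = {u : u = t • g u for some 0 < t < 1}` is unbounded. -/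
theorem leray_schauder_alternative
    {X : Type*} [NormedAddCommGroup X] [NormedSpace ℝ X] [CompleteSpace X]
    (g : X → X) (hg_cont : Continuous g)
    (hg_comp : ∀ s : Set X, Bornology.IsBounded s → IsCompact (closure (g '' s))) :
    (∃ u : X, g u = u) ∨
      ¬ Bornology.IsBounded {u : X | ∃ t : ℝ, 0 < t ∧ t < 1 ∧ u = t • g u} :=
  leray_schauder_alternative_general g hg_cont hg_comp
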